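/- arXiv:2211.00470 — 4 statements merged into one kernel-verified Lean document; each statement's English description precedes it below -/
import Mathlib

section
/- Let a ∈ ℝ and let c : ℝ → ℝ be measurable and positive on (0,+∞), and suppose there exists T > 0 such that ∫_T^{+∞} c(s)e^{-s} ds < +∞ (so for every t ≥ T the integral ∫_t^{+∞} c(s)e^{-s} ds lies in (0,+∞)). Then the ratio R(t) = (∫_t^{+∞} c(s)e^{-a·s} ds) / (∫_t^{+∞} c(s)e^{-s} ds), computed in [0,+∞], tends to 1 as t → +∞ if and only if a = 1. -/
open MeasureTheory Filter Set

/-!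
Read `c(s) ds` as a measure `μ`. For `a ≤ b` and `s > t` we have `e^{-bs} ≤ e^{(a-b)t} e^{-as}`;
integrating over `(t, ∞)` shows that the tail with exponent `b` is at most `e^{(a-b)t}` times the
one with exponent `a`. Hence the ratio of two tails with distinct exponents tends to `0` or `∞`.
-/

open scoped ENNReal Topology

/-- The tail `∫_{(t, ∞)} e^{-as} dμ(s)` of the Laplace transform of `μ` at `a`, valued in `[0, ∞]`
so that divergent tails are allowed. -/
noncomputable def laplaceTail (μ : Measure ℝ) (a t : ℝ) : ℝ≥0∞ :=
  ∫⁻ s in Ioi t, ENNReal.ofReal (Real.exp (-(a * s))) ∂μ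

section LaplaceTail

variable {μ : Measure ℝ} {a b T : ℝ}

theorem laplaceTail_antitone : Antitone (laplaceTail μ a) :=
  fun _ _ h => lintegral_mono_set (Ioi_subset_Ioi h)

theorem laplaceTail_pos_iff {t : ℝ} : 0 < laplaceTail μ a t ↔ 0 < μ (Ioi t) := by
  have hsupport : (Function.support fun s => ENNReal.ofReal (Real.exp (-(a * s)))) = univ :=
    eq_univ_of_forall fun s => (ENNReal.ofReal_pos.2 (Real.exp_pos _)).ne'
  rw [laplaceTail, setLIntegral_pos_iff (by fun_prop), hsupport, univ_inter]

theorem eventually_laplaceTail_ne_top (hfin : laplaceTail μ a T < ∞) :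
    ∀ᶠ t in atTop, laplaceTail μ a t ≠ ∞ :=
  (eventually_ge_atTop T).mono fun _ ht => ((laplaceTail_antitone ht).trans_lt hfin).ne

theorem laplaceTail_le_exp_mul (hab : a ≤ b) (t : ℝ) :
    laplaceTail μ b t ≤ ENNReal.ofReal (Real.exp ((a - b) * t)) * laplaceTail μ a t := by
  rw [laplaceTail, laplaceTail, ← lintegral_const_mul _ (by fun_prop)]
  refine setLIntegral_mono (by fun_prop) fun s (hs : t < s) => ?_
  rw [← ENNReal.ofReal_mul (Real.exp_pos _).le, ← Real.exp_add]
  gcongr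
  have hexponent : (a - b) * s ≤ (a - b) * t :=
    mul_le_mul_of_nonpos_left hs.le (sub_nonpos.2 hab)
  linarith

theorem tendsto_laplaceTail_div_zero (hab : a < b) :
    Tendsto (fun t => laplaceTail μ b t / laplaceTail μ a t) atTop (𝓝 0) := by
  have hexp : Tendsto (fun t => ENNReal.ofReal (Real.exp ((a - b) * t))) atTop (𝓝 0) := by
    simpa only [ENNReal.ofReal_zero, Function.comp_def, id_eq] using ENNReal.tendsto_ofReal
      (Real.tendsto_exp_atBot.comp (tendsto_id.const_mul_atTop_of_neg (sub_neg.2 hab)))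
  exact tendsto_of_tendsto_of_tendsto_of_le_of_le tendsto_const_nhds hexp (fun _ => zero_le)
    fun t => ENNReal.div_le_of_le_mul (laplaceTail_le_exp_mul hab.le t)

theorem tendsto_laplaceTail_div_top (hab : a < b) (hμ : ∀ t, 0 < μ (Ioi t))
    (hfin : laplaceTail μ b T < ∞) :
    Tendsto (fun t => laplaceTail μ a t / laplaceTail μ b t) atTop (𝓝 ∞) := by
  have hinv : Tendsto (fun t => (laplaceTail μ b t / laplaceTail μ a t)⁻¹) atTop (𝓝 ∞) := by
    simpa only [ENNReal.inv_zero] using (tendsto_laplaceTail_div_zero hab).inv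
  refine hinv.congr' ?_
  filter_upwards [eventually_laplaceTail_ne_top hfin] with t ht
  exact ENNReal.inv_div (.inr ht) (.inr (laplaceTail_pos_iff.2 (hμ t)).ne')

theorem tendsto_laplaceTail_div_self (hμ : ∀ t, 0 < μ (Ioi t)) (hfin : laplaceTail μ a T < ∞) :
    Tendsto (fun t => laplaceTail μ a t / laplaceTail μ a t) atTop (𝓝 1) := by
  refine tendsto_const_nhds.congr' ?_
  filter_upwards [eventually_laplaceTail_ne_top hfin] with t ht
  exact (ENNReal.div_self ((laplaceTail_pos_iff.2 (hμ t)).ne') ht).symm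

theorem limit_ratio_eq_one_iff_general (a b T : ℝ) (hμ : ∀ t, 0 < μ (Ioi t))
    (hfin : laplaceTail μ b T < ∞) :
    Tendsto (fun t => laplaceTail μ a t / laplaceTail μ b t) atTop (𝓝 1) ↔ a = b := by
  constructor
  · intro h
    rcases lt_trichotomy a b with hab | hab | hba
    · exact absurd (tendsto_nhds_unique h (tendsto_laplaceTail_div_top hab hμ hfin))
        ENNReal.one_ne_top
    · exact hab
    · exact absurd (tendsto_nhds_unique h (tendsto_laplaceTail_div_zero hba)) one_ne_zero
  · rintro rfl
    exact tendsto_laplaceTail_div_self hμ hfin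

end LaplaceTail

section WithDensity

variable {ν : Measure ℝ}

theorem laplaceTail_withDensity_ofReal {c : ℝ → ℝ} (hc : AEMeasurable c ν) (a t : ℝ) :
    laplaceTail (ν.withDensity fun s => ENNReal.ofReal (c s)) a t =
      ∫⁻ s in Ioi t, ENNReal.ofReal (c s * Real.exp (-(a * s))) ∂ν := by
  simp only [ENNReal.ofReal_mul' (Real.exp_pos _).le]
  exact setLIntegral_withDensity_eq_lintegral_mul₀ hc.ennreal_ofReal (by fun_prop)
    measurableSet_Ioi

theorem withDensity_Ioi_pos {f : ℝ → ℝ≥0∞} (hf : AEMeasurable f ν)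
    (hf_pos : ∀ᶠ s in atTop, 0 < f s) (hν : ∀ t, 0 < ν (Ioi t)) (t : ℝ) :
    0 < ν.withDensity f (Ioi t) := by
  obtain ⟨x, hx⟩ := eventually_atTop.1 hf_pos
  have hsubset : Ioi (max x t) ⊆ {s | f s ≠ 0} ∩ Ioi t := fun s hs =>
    ⟨(hx s ((le_max_left x t).trans (le_of_lt hs))).ne', (le_max_right x t).trans_lt hs⟩
  refine pos_iff_ne_zero.2 fun h => (hν (max x t)).ne' (measure_mono_null hsubset ?_)
  exact (withDensity_apply_eq_zero' hf).1 h

end WithDensity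

/-- Let `a ∈ ℝ` and let `c : ℝ → ℝ` be measurable and positive on `(0,+∞)`, and suppose there
exists `T > 0` such that `∫_T^{+∞} c(s)e^{-s} ds < +∞`.  Then the ratio
`(∫_t^{+∞} c(s)e^{-a·s} ds) / (∫_t^{+∞} c(s)e^{-s} ds)`, computed in `[0,+∞]`, tends to `1`
as `t → +∞` if and only if `a = 1`. -/
theorem limit_ratio_eq_one_iff (a : ℝ) (c : ℝ → ℝ) (hc_meas : Measurable c)
    (hc_pos : ∀ s ∈ Set.Ioi (0 : ℝ), 0 < c s)
    (T : ℝ) (hT : 0 < T)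
    (hfin : ∫⁻ s in Set.Ioi T, ENNReal.ofReal (c s * Real.exp (-s)) < ⊤) :
    Filter.Tendsto
      (fun t : ℝ =>
        (∫⁻ s in Set.Ioi t, ENNReal.ofReal (c s * Real.exp (-(a * s)))) /
          (∫⁻ s in Set.Ioi t, ENNReal.ofReal (c s * Real.exp (-s))))
      Filter.atTop (nhds 1) ↔ a = 1 := by
  have hμ := withDensity_Ioi_pos (ν := volume) hc_meas.ennreal_ofReal.aemeasurable
    ((eventually_gt_atTop 0).mono fun s hs => ENNReal.ofReal_pos.2 (hc_pos s hs)) (by simp)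
  simpa only [laplaceTail_withDensity_ofReal hc_meas.aemeasurable, one_mul, hfin, forall_const]
    using limit_ratio_eq_one_iff_general a 1 T hμ
end

section
/- Let a ∈ ℝ and let c : ℝ → ℝ be measurable and positive on (0,+∞), and suppose there exists T > 0 such that ∫_T^{+∞} c(s)e^{-s} ds < +∞ (so for every t ≥ T the integral ∫_t^{+∞} c(s)e^{-s} ds lies in (0,+∞)). Then the ratio R(t) = (∫_t^{+∞} c(s)e^{-a·s} ds) / (∫_t^{+∞} c(s)e^{-s} ds), computed in [0,+∞], tends to +∞ as t → +∞ if and only if a < 1. -/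
open MeasureTheory Filter Set

open scoped ENNReal Topology

/-!
If `f / g → ∞`, then beyond some point `f` exceeds any prescribed multiple of `g`, hence so do
the tail integrals. Applied to `f s = exp (-(a * s))` and `g s = exp (-(b * s))` against an
arbitrary measure this gives the case `a < b`; when `b ≤ a`, eventually `f ≤ g` and the ratio
of tails is at most `1`. A density is absorbed into the measure.
-/

section Density

variable {α : Type*} [MeasurableSpace α] {μ : Measure α} {s : Set α}

theorem setLIntegral_pos_of_forall_pos {f : α → ℝ≥0∞} (hf : Measurable f)
    (hf_pos : ∀ x ∈ s, 0 < f x) (hs : 0 < μ s) : 0 < ∫⁻ x in s, f x ∂μ := by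
  have h_support : s ⊆ Function.support f := fun x hx ↦ (hf_pos x hx).ne'
  rwa [setLIntegral_pos_iff hf, inter_eq_right.2 h_support]

theorem setLIntegral_ofReal_mul_eq_withDensity {c f : α → ℝ} (hc : Measurable c)
    (hf : Measurable f) (hf_nonneg : 0 ≤ f) (hs : MeasurableSet s) :
    ∫⁻ x in s, ENNReal.ofReal (c x * f x) ∂μ =
      ∫⁻ x in s, ENNReal.ofReal (f x) ∂μ.withDensity fun x ↦ ENNReal.ofReal (c x) := by
  rw [setLIntegral_withDensity_eq_setLIntegral_mul μ hc.ennreal_ofReal hf.ennreal_ofReal hs]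
  simp only [Pi.mul_apply, ENNReal.ofReal_mul' (hf_nonneg _)]

end Density

section Tails

variable {α : Type*} [LinearOrder α] [TopologicalSpace α] [ClosedIicTopology α]
  [MeasurableSpace α] [OpensMeasurableSpace α] {μ : Measure α} {f g : α → ℝ≥0∞}

theorem eventually_setLIntegral_Ioi_mono (h : f ≤ᶠ[atTop] g) :
    ∀ᶠ t in atTop, ∫⁻ s in Ioi t, f s ∂μ ≤ ∫⁻ s in Ioi t, g s ∂μ := by
  filter_upwards [eventually_forall_ge_atTop.2 h] with t ht
  exact setLIntegral_mono' measurableSet_Ioi fun s hs ↦ ht s hs.le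

theorem tendsto_setLIntegral_Ioi_div_top (h : Tendsto (fun s ↦ f s / g s) atTop (𝓝 ⊤))
    (hg_ne_zero : ∀ᶠ t in atTop, ∫⁻ s in Ioi t, g s ∂μ ≠ 0)
    (hg_ne_top : ∀ᶠ t in atTop, ∫⁻ s in Ioi t, g s ∂μ ≠ ⊤) :
    Tendsto (fun t ↦ (∫⁻ s in Ioi t, f s ∂μ) / ∫⁻ s in Ioi t, g s ∂μ) atTop (𝓝 ⊤) := by
  refine ENNReal.tendsto_nhds_top fun n ↦ ?_
  have h_mul_le : ∀ᶠ s in atTop, ((n + 1 : ℕ) : ℝ≥0∞) * g s ≤ f s := by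
    filter_upwards [ENNReal.tendsto_nhds_top_iff_nat.1 h (n + 1)] with s hs
    exact ENNReal.mul_le_of_le_div hs.le
  filter_upwards [eventually_setLIntegral_Ioi_mono (μ := μ) h_mul_le, hg_ne_zero, hg_ne_top]
    with t ht h_ne_zero h_ne_top
  calc (n : ℝ≥0∞) < (n + 1 : ℕ) := by exact_mod_cast n.lt_succ_self
    _ ≤ (∫⁻ s in Ioi t, f s ∂μ) / ∫⁻ s in Ioi t, g s ∂μ :=
      (ENNReal.le_div_iff_mul_le (.inl h_ne_zero) (.inl h_ne_top)).2
        ((lintegral_const_mul_le _ _).trans ht)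

theorem eventually_setLIntegral_Ioi_div_le {C : ℝ≥0∞} (hC : C ≠ ⊤)
    (h : ∀ᶠ s in atTop, f s ≤ C * g s) :
    ∀ᶠ t in atTop, (∫⁻ s in Ioi t, f s ∂μ) / ∫⁻ s in Ioi t, g s ∂μ ≤ C := by
  filter_upwards [eventually_setLIntegral_Ioi_mono (μ := μ) h] with t ht
  exact ENNReal.div_le_of_le_mul (ht.trans_eq (lintegral_const_mul' C g hC))

theorem withDensity_ofReal_Ioi_pos (hμ : ∀ t, 0 < μ (Ioi t)) {c : α → ℝ} (hc : Measurable c)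
    {r : α} (hc_pos : ∀ s ∈ Ioi r, 0 < c s) (t : α) :
    0 < μ.withDensity (fun s ↦ ENNReal.ofReal (c s)) (Ioi t) := by
  rw [withDensity_apply _ measurableSet_Ioi]
  calc 0 < ∫⁻ s in Ioi (max r t), ENNReal.ofReal (c s) ∂μ :=
        setLIntegral_pos_of_forall_pos hc.ennreal_ofReal
          (fun s hs ↦ ENNReal.ofReal_pos.2 (hc_pos s ((le_max_left r t).trans_lt hs))) (hμ _)
    _ ≤ ∫⁻ s in Ioi t, ENNReal.ofReal (c s) ∂μ :=
        lintegral_mono_set (Ioi_subset_Ioi (le_max_right r t))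

end Tails

theorem tendsto_ofReal_exp_div_ofReal_exp_top {a b : ℝ} (hab : a < b) :
    Tendsto (fun s : ℝ ↦ ENNReal.ofReal (Real.exp (-(a * s))) /
      ENNReal.ofReal (Real.exp (-(b * s)))) atTop (𝓝 ⊤) := by
  have h_ratio (s : ℝ) : ENNReal.ofReal (Real.exp (-(a * s))) /
      ENNReal.ofReal (Real.exp (-(b * s))) = ENNReal.ofReal (Real.exp ((b - a) * s)) := by
    rw [← ENNReal.ofReal_div_of_pos (Real.exp_pos _), ← Real.exp_sub]
    ring_nf
  simp only [h_ratio]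
  exact ENNReal.tendsto_ofReal_atTop.comp <| Real.tendsto_exp_atTop.comp <|
    tendsto_id.const_mul_atTop (sub_pos.2 hab)

theorem eventually_ofReal_exp_le_ofReal_exp {a b : ℝ} (hba : b ≤ a) :
    ∀ᶠ s : ℝ in atTop,
      ENNReal.ofReal (Real.exp (-(a * s))) ≤ ENNReal.ofReal (Real.exp (-(b * s))) := by
  filter_upwards [eventually_ge_atTop 0] with s hs
  gcongr

theorem limit_ratio_eq_top_iff_general {μ : Measure ℝ} {a b T : ℝ} (hμ : ∀ t, 0 < μ (Ioi t))
    (hfin : ∫⁻ s in Ioi T, ENNReal.ofReal (Real.exp (-(b * s))) ∂μ < ⊤) :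
    Tendsto
      (fun t : ℝ ↦
        (∫⁻ s in Ioi t, ENNReal.ofReal (Real.exp (-(a * s))) ∂μ) /
          (∫⁻ s in Ioi t, ENNReal.ofReal (Real.exp (-(b * s))) ∂μ))
      atTop (𝓝 ⊤) ↔ a < b := by
  refine ⟨fun h_top ↦ ?_, fun hab ↦ ?_⟩
  · by_contra! hba
    have h_le_one := eventually_setLIntegral_Ioi_div_le (μ := μ) ENNReal.one_ne_top <| by
      simpa only [one_mul] using eventually_ofReal_exp_le_ofReal_exp hba
    exact ENNReal.one_lt_top.not_ge (le_of_tendsto h_top h_le_one)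
  · refine tendsto_setLIntegral_Ioi_div_top (tendsto_ofReal_exp_div_ofReal_exp_top hab) ?_ ?_
    · exact .of_forall fun t ↦ (setLIntegral_pos_of_forall_pos (by fun_prop)
        (fun s _ ↦ ENNReal.ofReal_pos.2 (Real.exp_pos _)) (hμ t)).ne'
    · filter_upwards [eventually_ge_atTop T] with t ht
      exact ((lintegral_mono_set (Ioi_subset_Ioi ht)).trans_lt hfin).ne

/-- Let `a ∈ ℝ` and let `c : ℝ → ℝ` be measurable and positive on `(0,+∞)`, and suppose there
exists `T > 0` such that `∫_T^{+∞} c(s)e^{-s} ds < +∞`.  Then the ratio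
`(∫_t^{+∞} c(s)e^{-a·s} ds) / (∫_t^{+∞} c(s)e^{-s} ds)`, computed in `[0,+∞]`, tends to `+∞`
as `t → +∞` if and only if `a < 1`. -/
theorem limit_ratio_eq_top_iff (a : ℝ) (c : ℝ → ℝ) (hc_meas : Measurable c)
    (hc_pos : ∀ s ∈ Set.Ioi (0 : ℝ), 0 < c s)
    (T : ℝ) (hT : 0 < T)
    (hfin : ∫⁻ s in Set.Ioi T, ENNReal.ofReal (c s * Real.exp (-s)) < ⊤) :
    Filter.Tendsto
      (fun t : ℝ =>
        (∫⁻ s in Set.Ioi t, ENNReal.ofReal (c s * Real.exp (-(a * s)))) /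
          (∫⁻ s in Set.Ioi t, ENNReal.ofReal (c s * Real.exp (-s))))
      Filter.atTop (nhds ⊤) ↔ a < 1 := by
  have h_absorb (k t : ℝ) : ∫⁻ s in Ioi t, ENNReal.ofReal (c s * Real.exp (-(k * s))) =
      ∫⁻ s in Ioi t, ENNReal.ofReal (Real.exp (-(k * s)))
        ∂volume.withDensity fun s ↦ ENNReal.ofReal (c s) :=
    setLIntegral_ofReal_mul_eq_withDensity hc_meas (by fun_prop) (fun _ ↦ Real.exp_nonneg _)
      measurableSet_Ioi
  have h_tail_pos := withDensity_ofReal_Ioi_pos (μ := volume) (by simp) hc_meas hc_pos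
  have h_iff := limit_ratio_eq_top_iff_general (a := a) (b := 1) (T := T) h_tail_pos
  simp only [← h_absorb] at h_iff
  simpa only [one_mul] using h_iff (by simpa only [one_mul] using hfin)
end

section
/- Let n₁, n₂ ≥ 1, let D₁ ⊆ ℂ^{n₁} and D₂ ⊆ ℂ^{n₂} be nonempty connected open sets, and let F be holomorphic on D₁ × D₂ with F not identically zero on D₁ × D₂. Let U ⊆ D₁ and V ⊆ D₂ be nonempty open subsets, and let f₁ be holomorphic on U and f₂ holomorphic on V such that F(x, y) = f₁(x) · f₂(y) for all (x, y) ∈ U × V. Then there exist a holomorphic function F₁ on D₁ and a holomorphic function F₂ on D₂ such that F₁ = f₁ on U, F₂ = f₂ on V, and F(x, y) = F₁(x) · F₂(y) for all (x, y) ∈ D₁ × D₂. -/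
open Set

/-!
If `F(x, y) = f₁(x) f₂(y)` near a point `(a, b)` where `F` does not vanish, then
`F(a, b) F(x, y) = F(x, b) F(a, y)` there. The slices `F(·, b)` and `F(a, ·)` are holomorphic on all
of `D₁` and `D₂`, so the identity theorem propagates this identity to `D₁ × D₂`, and the slices
divided by `f₂(b)` and `f₁(a)` are the required extensions of `f₁` and `f₂`. The identity
theorem in several variables reduces to one variable by restricting to complex lines inside balls.
-/

section IdentityTheorem

open scoped Topology

variable {E G : Type*} [NormedAddCommGroup E] [NormedSpace ℂ E]
  [NormedAddCommGroup G] [NormedSpace ℂ G] [CompleteSpace G]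
  {f g : E → G} {D U : Set E} {x : E}

theorem eqOn_zero_of_convex_of_eventuallyEq_zero (hD : IsOpen D) (hconv : Convex ℝ D)
    (hf : DifferentiableOn ℂ f D) (hx : x ∈ D) (hfx : f =ᶠ[𝓝 x] 0) : EqOn f 0 D := by
  intro z hz
  let line : ℂ → E := fun t ↦ x + t • (z - x)
  have hline : Differentiable ℂ line := by fun_prop
  have h0 : line 0 = x := by simp [line]
  have h1 : line 1 = z := by simp [line]
  have hopen : IsOpen (line ⁻¹' D) := hD.preimage hline.continuous
  have hpre : IsPreconnected (line ⁻¹' D) :=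
    ((hconv.translate_preimage_right x).linear_preimage
      ((LinearMap.toSpanSingleton ℂ E (z - x)).restrictScalars ℝ)).isPreconnected
  have han : AnalyticOnNhd ℂ (f ∘ line) (line ⁻¹' D) :=
    (hf.comp hline.differentiableOn (mapsTo_preimage line D)).analyticOnNhd hopen
  have hzero : f ∘ line =ᶠ[𝓝 0] 0 :=
    (hline.continuous.tendsto' 0 x h0).eventually hfx
  have hvanish : EqOn (f ∘ line) 0 (line ⁻¹' D) :=
    han.eqOn_zero_of_preconnected_of_eventuallyEq_zero hpre (by simpa [h0] using hx) hzero
  simpa [h1] using hvanish (show (1 : ℂ) ∈ line ⁻¹' D by simpa [h1] using hz)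

theorem eqOn_zero_of_isPreconnected_of_eventuallyEq_zero (hD : IsOpen D) (hconn : IsPreconnected D)
    (hf : DifferentiableOn ℂ f D) (hx : x ∈ D) (hfx : f =ᶠ[𝓝 x] 0) : EqOn f 0 D := by
  suffices hsub : D ⊆ {z | f =ᶠ[𝓝 z] 0} from fun z hz ↦ (hsub hz).self_of_nhds
  refine hconn.subset_of_closure_inter_subset isOpen_setOfPred_eventually_nhds ⟨x, hx, hfx⟩ ?_
  rintro z ⟨hz, hzD⟩
  obtain ⟨r, hr, hball⟩ := Metric.isOpen_iff.1 hD z hzD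
  obtain ⟨y, hfy, hyz⟩ := Metric.mem_closure_iff.1 hz r hr
  have hy : y ∈ Metric.ball z r := Metric.mem_ball'.2 hyz
  exact (eqOn_zero_of_convex_of_eventuallyEq_zero Metric.isOpen_ball (convex_ball z r)
    (hf.mono hball) hy hfy).eventuallyEq_of_mem (Metric.ball_mem_nhds z hr)

theorem eqOn_of_isPreconnected_of_eqOn_isOpen (hD : IsOpen D) (hconn : IsPreconnected D)
    (hf : DifferentiableOn ℂ f D) (hg : DifferentiableOn ℂ g D)
    (hU : IsOpen U) (hne : U.Nonempty) (hUD : U ⊆ D) (hfg : EqOn f g U) : EqOn f g D := by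
  obtain ⟨x, hx⟩ := hne
  have hsub : f - g =ᶠ[𝓝 x] 0 :=
    Filter.eventually_of_mem (hU.mem_nhds hx) fun z hz ↦ sub_eq_zero.2 (hfg hz)
  exact fun z hz ↦ sub_eq_zero.1 <|
    eqOn_zero_of_isPreconnected_of_eventuallyEq_zero hD hconn (hf.sub hg) (hUD hx) hsub hz

end IdentityTheorem

section Slices

variable {𝕜 E₁ E₂ G : Type*} [NontriviallyNormedField 𝕜]
  [NormedAddCommGroup E₁] [NormedSpace 𝕜 E₁] [NormedAddCommGroup E₂] [NormedSpace 𝕜 E₂]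
  [NormedAddCommGroup G] [NormedSpace 𝕜 G]
  {F : E₁ × E₂ → G} {D₁ : Set E₁} {D₂ : Set E₂}

theorem differentiableOn_slice_left (hF : DifferentiableOn 𝕜 F (D₁ ×ˢ D₂)) {b : E₂} (hb : b ∈ D₂) :
    DifferentiableOn 𝕜 (fun x ↦ F (x, b)) D₁ :=
  hF.comp (f := fun x ↦ (x, b)) (by fun_prop) fun _ hx ↦ ⟨hx, hb⟩

theorem differentiableOn_slice_right (hF : DifferentiableOn 𝕜 F (D₁ ×ˢ D₂)) {a : E₁} (ha : a ∈ D₁) :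
    DifferentiableOn 𝕜 (fun y ↦ F (a, y)) D₂ :=
  hF.comp (f := fun y ↦ (a, y)) (by fun_prop) fun _ hy ↦ ⟨ha, hy⟩

end Slices

section Splitting

variable {E₁ E₂ : Type*} [NormedAddCommGroup E₁] [NormedSpace ℂ E₁]
  [NormedAddCommGroup E₂] [NormedSpace ℂ E₂]
  {F : E₁ × E₂ → ℂ} {D₁ U : Set E₁} {D₂ V : Set E₂}

theorem mul_eq_slice_mul_slice (hD₁ : IsOpen D₁) (hD₂ : IsOpen D₂)
    (hD₁conn : IsPreconnected D₁) (hD₂conn : IsPreconnected D₂)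
    (hF : DifferentiableOn ℂ F (D₁ ×ˢ D₂)) (hU : IsOpen U) (hV : IsOpen V)
    (hUD : U ⊆ D₁) (hVD : V ⊆ D₂) {a : E₁} {b : E₂} (ha : a ∈ U) (hb : b ∈ V)
    (h : ∀ x ∈ U, ∀ y ∈ V, F (a, b) * F (x, y) = F (x, b) * F (a, y)) :
    ∀ x ∈ D₁, ∀ y ∈ D₂, F (a, b) * F (x, y) = F (x, b) * F (a, y) := by
  have hslice₁ : DifferentiableOn ℂ (fun p : E₁ × E₂ ↦ F (p.1, b)) (D₁ ×ˢ D₂) :=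
    (differentiableOn_slice_left hF (hVD hb)).comp differentiableOn_fst fun _ hp ↦ hp.1
  have hslice₂ : DifferentiableOn ℂ (fun p : E₁ × E₂ ↦ F (a, p.2)) (D₁ ×ˢ D₂) :=
    (differentiableOn_slice_right hF (hUD ha)).comp differentiableOn_snd fun _ hp ↦ hp.2
  have heq : EqOn (fun p ↦ F (a, b) * F p) (fun p ↦ F (p.1, b) * F (a, p.2)) (D₁ ×ˢ D₂) :=
    eqOn_of_isPreconnected_of_eqOn_isOpen (hD₁.prod hD₂) (hD₁conn.prod hD₂conn)
      (hF.const_mul _) (hslice₁.mul hslice₂) (hU.prod hV) ⟨(a, b), ha, hb⟩ (prod_mono hUD hVD)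
      fun p hp ↦ h p.1 hp.1 p.2 hp.2
  exact fun x hx y hy ↦ heq (mk_mem_prod hx hy)

theorem splitting_of_product_holomorphic_general (hD₁ : IsOpen D₁) (hD₂ : IsOpen D₂)
    (hD₁conn : IsPreconnected D₁) (hD₂conn : IsPreconnected D₂)
    (hF : DifferentiableOn ℂ F (D₁ ×ˢ D₂)) (hFne : ¬ EqOn F 0 (D₁ ×ˢ D₂))
    (hU : IsOpen U) (hV : IsOpen V) (hUne : U.Nonempty) (hVne : V.Nonempty)
    (hUD : U ⊆ D₁) (hVD : V ⊆ D₂) {f₁ : E₁ → ℂ} {f₂ : E₂ → ℂ}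
    (hprod : ∀ x ∈ U, ∀ y ∈ V, F (x, y) = f₁ x * f₂ y) :
    ∃ (F₁ : E₁ → ℂ) (F₂ : E₂ → ℂ),
      DifferentiableOn ℂ F₁ D₁ ∧ DifferentiableOn ℂ F₂ D₂ ∧
      EqOn F₁ f₁ U ∧ EqOn F₂ f₂ V ∧ ∀ x ∈ D₁, ∀ y ∈ D₂, F (x, y) = F₁ x * F₂ y := by
  obtain ⟨a, ha, b, hb, hab⟩ : ∃ a ∈ U, ∃ b ∈ V, F (a, b) ≠ 0 := by
    by_contra! hzero
    exact hFne <| eqOn_of_isPreconnected_of_eqOn_isOpen (hD₁.prod hD₂) (hD₁conn.prod hD₂conn) hF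
      (differentiableOn_const 0) (hU.prod hV) (hUne.prod hVne) (prod_mono hUD hVD)
      fun p hp ↦ hzero p.1 hp.1 p.2 hp.2
  have hfab : F (a, b) = f₁ a * f₂ b := hprod a ha b hb
  have hf₁a : f₁ a ≠ 0 := left_ne_zero_of_mul (hfab ▸ hab)
  have hf₂b : f₂ b ≠ 0 := right_ne_zero_of_mul (hfab ▸ hab)
  have hslices : ∀ x ∈ D₁, ∀ y ∈ D₂, F (a, b) * F (x, y) = F (x, b) * F (a, y) := by
    refine mul_eq_slice_mul_slice hD₁ hD₂ hD₁conn hD₂conn hF hU hV hUD hVD ha hb ?_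
    intro x hx y hy
    rw [hfab, hprod x hx y hy, hprod x hx b hb, hprod a ha y hy]
    ring
  refine ⟨fun x ↦ (f₂ b)⁻¹ * F (x, b), fun y ↦ (f₁ a)⁻¹ * F (a, y),
    (differentiableOn_slice_left hF (hVD hb)).const_mul _,
    (differentiableOn_slice_right hF (hUD ha)).const_mul _,
    fun x hx ↦ ?_, fun y hy ↦ ?_, fun x hx y hy ↦ ?_⟩
  · exact (inv_mul_eq_iff_eq_mul₀ hf₂b).2 ((hprod x hx b hb).trans (mul_comm _ _))
  · exact (inv_mul_eq_iff_eq_mul₀ hf₁a).2 (hprod a ha y hy)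
  · calc F (x, y) = (F (a, b))⁻¹ * (F (a, b) * F (x, y)) := (inv_mul_cancel_left₀ hab _).symm
      _ = (f₁ a * f₂ b)⁻¹ * (F (x, b) * F (a, y)) := by
        rw [hslices x hx y hy, hfab]
      _ = (f₂ b)⁻¹ * F (x, b) * ((f₁ a)⁻¹ * F (a, y)) := by
        rw [mul_inv_rev, mul_mul_mul_comm]

end Splitting

/-- Let `n₁, n₂ ≥ 1`, let `D₁ ⊆ ℂ^{n₁}`, `D₂ ⊆ ℂ^{n₂}` be nonempty connected open sets, and let
`F` be holomorphic on `D₁ × D₂` with `F` not identically zero on `D₁ × D₂`.  Let `U ⊆ D₁`,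
`V ⊆ D₂` be nonempty open subsets, and let `f₁` be holomorphic on `U`, `f₂` holomorphic on `V`
with `F(x, y) = f₁(x) · f₂(y)` for all `(x, y) ∈ U × V`.  Then there exist a holomorphic
function `F₁` on `D₁` and a holomorphic function `F₂` on `D₂` such that `F₁ = f₁` on `U`,
`F₂ = f₂` on `V`, and `F(x, y) = F₁(x) · F₂(y)` for all `(x, y) ∈ D₁ × D₂`. -/
theorem splitting_of_product_holomorphic (n₁ n₂ : ℕ) (hn₁ : 1 ≤ n₁) (hn₂ : 1 ≤ n₂)
    (D₁ : Set (Fin n₁ → ℂ)) (D₂ : Set (Fin n₂ → ℂ))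
    (hD₁open : IsOpen D₁) (hD₂open : IsOpen D₂)
    (hD₁conn : IsConnected D₁) (hD₂conn : IsConnected D₂)
    (F : (Fin n₁ → ℂ) × (Fin n₂ → ℂ) → ℂ)
    (hF : DifferentiableOn ℂ F (D₁ ×ˢ D₂))
    (hFne : ¬ ∀ p ∈ D₁ ×ˢ D₂, F p = 0)
    (U : Set (Fin n₁ → ℂ)) (V : Set (Fin n₂ → ℂ))
    (hUopen : IsOpen U) (hVopen : IsOpen V)
    (hUne : U.Nonempty) (hVne : V.Nonempty)
    (hUD : U ⊆ D₁) (hVD : V ⊆ D₂)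
    (f₁ : (Fin n₁ → ℂ) → ℂ) (f₂ : (Fin n₂ → ℂ) → ℂ)
    (hf₁ : DifferentiableOn ℂ f₁ U) (hf₂ : DifferentiableOn ℂ f₂ V)
    (hprod : ∀ x ∈ U, ∀ y ∈ V, F (x, y) = f₁ x * f₂ y) :
    ∃ (F₁ : (Fin n₁ → ℂ) → ℂ) (F₂ : (Fin n₂ → ℂ) → ℂ),
      DifferentiableOn ℂ F₁ D₁ ∧ DifferentiableOn ℂ F₂ D₂ ∧
      Set.EqOn F₁ f₁ U ∧ Set.EqOn F₂ f₂ V ∧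
      ∀ x ∈ D₁, ∀ y ∈ D₂, F (x, y) = F₁ x * F₂ y :=
  splitting_of_product_holomorphic_general hD₁open hD₂open hD₁conn.isPreconnected
    hD₂conn.isPreconnected hF (fun h ↦ hFne fun _ hp ↦ h hp) hUopen hVopen hUne hVne hUD hVD hprod
end

section
/- Let T ∈ ℝ and let c : (T, +∞) → (0, +∞) be a measurable function such that t ↦ c(t)e^{−t} is decreasing (monotone nonincreasing) on (T, +∞) and ∫_{T₁}^{+∞} c(s)e^{−s} ds < +∞ for some T₁ > T. Then there exists a measurable function ĉ : (T, +∞) → (0, +∞) satisfying: (1) ĉ(t) ≥ c(t) for all t ∈ (T, +∞); (2) t ↦ ĉ(t)e^{−t} is strictly decreasing on (T, +∞), and ĉ is increasing (monotone nondecreasing) on (a, +∞) for some real number a > T; (3) ∫_{T₁}^{+∞} ĉ(s)e^{−s} ds < +∞. -/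
open MeasureTheory Set

/-!
Past the point `T₁`, replace `c` by `ĉ(t) = c(T₁) + ∫_{T₁}^t c`, which increases because `c ≥ 0`.
Antitonicity of `c(t)e^{-t}` says that `c` grows at most like `e^t`. Looking backwards from `t`,
this gives `c(s) ≥ c(t)e^{s-t}`, which integrates to `ĉ ≥ c`; looking forwards, it gives
`c(s) ≤ c(t)e^{s-t} ≤ ĉ(t)e^{s-t}`, which integrates to `ĉ(s) ≤ ĉ(t)e^{s-t}`. By Tonelli,
`∫_{T₁}^∞ e^{-t} ∫_{T₁}^t c(s) ds dt = ∫_{T₁}^∞ c(s)e^{-s} ds`, so integrability is not lost.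
Adding `e^{t/2}` makes `ĉ(t)e^{-t}` strictly decreasing and keeps the other properties.
-/

section ExponentialGrowth

variable {c : ℝ → ℝ} {s : Set ℝ} {x y : ℝ}

lemma antitoneOn_mul_exp_neg_iff :
    AntitoneOn (fun t => c t * Real.exp (-t)) s ↔
      ∀ x ∈ s, ∀ y ∈ s, x ≤ y → c y ≤ c x * Real.exp (y - x) := by
  have key (x y : ℝ) :
      c y * Real.exp (-y) ≤ c x * Real.exp (-x) ↔ c y ≤ c x * Real.exp (y - x) := by
    rw [← mul_le_mul_iff_left₀ (Real.exp_pos y), mul_assoc, mul_assoc, ← Real.exp_add,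
      ← Real.exp_add, neg_add_cancel, Real.exp_zero, mul_one, neg_add_eq_sub]
  exact ⟨fun h x hx y hy hxy => (key x y).1 (h hx hy hxy),
    fun h x hx y hy hxy => (key x y).2 (h x hx y hy hxy)⟩

lemma mul_exp_sub_le_of_antitoneOn_mul_exp_neg
    (hc : AntitoneOn (fun t => c t * Real.exp (-t)) s) (hx : x ∈ s) (hy : y ∈ s) (hxy : x ≤ y) :
    c y * Real.exp (x - y) ≤ c x := by
  rw [← neg_sub y x, Real.exp_neg, ← div_eq_mul_inv, div_le_iff₀ (Real.exp_pos _)]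
  exact antitoneOn_mul_exp_neg_iff.1 hc x hx y hy hxy

lemma intervalIntegrable_of_antitoneOn_mul_exp_neg
    (hc : AntitoneOn (fun t => c t * Real.exp (-t)) (uIcc x y)) :
    IntervalIntegrable c volume x y := by
  have h := (hc.intervalIntegrable (μ := volume)).mul_continuousOn Real.continuous_exp.continuousOn
  simpa only [mul_assoc, ← Real.exp_add, neg_add_cancel, Real.exp_zero, mul_one] using h

lemma integral_exp_sub (x y z : ℝ) :
    ∫ r in x..y, Real.exp (r - z) = Real.exp (y - z) - Real.exp (x - z) := by
  rw [intervalIntegral.integral_comp_sub_right, integral_exp]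

lemma integral_le_mul_exp_sub_one
    (hc : AntitoneOn (fun t => c t * Real.exp (-t)) (Icc x y)) (hxy : x ≤ y) :
    ∫ r in x..y, c r ≤ c x * (Real.exp (y - x) - 1) := by
  calc ∫ r in x..y, c r ≤ ∫ r in x..y, c x * Real.exp (r - x) :=
        intervalIntegral.integral_mono_on hxy
          (intervalIntegrable_of_antitoneOn_mul_exp_neg (by rwa [uIcc_of_le hxy]))
          (Continuous.intervalIntegrable (by fun_prop) _ _) fun r hr =>
            antitoneOn_mul_exp_neg_iff.1 hc x (left_mem_Icc.2 hxy) r hr hr.1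
    _ = c x * (Real.exp (y - x) - 1) := by
        rw [intervalIntegral.integral_const_mul, integral_exp_sub, sub_self, Real.exp_zero]

lemma mul_one_sub_exp_le_integral
    (hc : AntitoneOn (fun t => c t * Real.exp (-t)) (Icc x y)) (hxy : x ≤ y) :
    c y * (1 - Real.exp (x - y)) ≤ ∫ r in x..y, c r := by
  calc c y * (1 - Real.exp (x - y)) = ∫ r in x..y, c y * Real.exp (r - y) := by
        rw [intervalIntegral.integral_const_mul, integral_exp_sub, sub_self, Real.exp_zero]
    _ ≤ ∫ r in x..y, c r :=
        intervalIntegral.integral_mono_on hxy (Continuous.intervalIntegrable (by fun_prop) _ _)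
          (intervalIntegrable_of_antitoneOn_mul_exp_neg (by rwa [uIcc_of_le hxy])) fun r hr =>
            mul_exp_sub_le_of_antitoneOn_mul_exp_neg hc hr (right_mem_Icc.2 hxy) hr.2

end ExponentialGrowth

section Tonelli

open scoped ENNReal

lemma lintegral_measure_Iic_eq_lintegral_measure_Ici {α : Type*} [TopologicalSpace α]
    [LinearOrder α] [OrderClosedTopology α] [SecondCountableTopology α] [MeasurableSpace α]
    [OpensMeasurableSpace α] (μ ν : Measure α) [SFinite μ] [SFinite ν] :
    ∫⁻ t, μ (Iic t) ∂ν = ∫⁻ s, ν (Ici s) ∂μ := by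
  have hle : MeasurableSet {p : α × α | p.1 ≤ p.2} :=
    measurableSet_le measurable_fst measurable_snd
  exact (Measure.prod_apply_symm hle).symm.trans (Measure.prod_apply hle)

lemma setLIntegral_Ioi_setLIntegral_Ioc_mul (ρ : Measure ℝ) [SFinite ρ] {g w : ℝ → ℝ≥0∞}
    (hg : Measurable g) (hw : Measurable w) (a : ℝ) :
    ∫⁻ t in Ioi a, (∫⁻ s in Ioc a t, g s ∂ρ) * w t ∂ρ =
      ∫⁻ s in Ioi a, g s * ∫⁻ t in Ici s, w t ∂ρ ∂ρ := by
  set μ : Measure ℝ := (ρ.restrict (Ioi a)).withDensity g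
  set ν : Measure ℝ := (ρ.restrict (Ioi a)).withDensity w
  have hμ (t : ℝ) : μ (Iic t) = ∫⁻ s in Ioc a t, g s ∂ρ := by
    rw [withDensity_apply _ measurableSet_Iic, Measure.restrict_restrict measurableSet_Iic,
      inter_comm, Ioi_inter_Iic]
  have hν : ∀ s ∈ Ioi a, ν (Ici s) = ∫⁻ t in Ici s, w t ∂ρ := fun s hs => by
    rw [withDensity_apply _ measurableSet_Ici, Measure.restrict_restrict measurableSet_Ici,
      inter_eq_left.2 (Ici_subset_Ioi.2 hs)]
  have hμ_meas : Measurable fun t => μ (Iic t) :=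
    Monotone.measurable fun _ _ h => measure_mono (Iic_subset_Iic.2 h)
  have hν_meas : Measurable fun s => ν (Ici s) :=
    Antitone.measurable fun _ _ h => measure_mono (Ici_subset_Ici.2 h)
  calc ∫⁻ t in Ioi a, (∫⁻ s in Ioc a t, g s ∂ρ) * w t ∂ρ = ∫⁻ t, μ (Iic t) ∂ν := by
        rw [lintegral_withDensity_eq_lintegral_mul _ hw hμ_meas]
        simp only [Pi.mul_apply, hμ, mul_comm]
    _ = ∫⁻ s, ν (Ici s) ∂μ := lintegral_measure_Iic_eq_lintegral_measure_Ici μ ν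
    _ = ∫⁻ s in Ioi a, g s * ∫⁻ t in Ici s, w t ∂ρ ∂ρ := by
        rw [lintegral_withDensity_eq_lintegral_mul _ hg hν_meas]
        exact setLIntegral_congr_fun measurableSet_Ioi fun s hs => by
          rw [Pi.mul_apply, hν s hs]

lemma setLIntegral_Ioi_exp_neg (a : ℝ) :
    ∫⁻ t in Ioi a, ENNReal.ofReal (Real.exp (-t)) = ENNReal.ofReal (Real.exp (-a)) := by
  rw [← ofReal_integral_eq_lintegral_ofReal (integrableOn_exp_neg_Ioi a)
    (ae_of_all _ fun t => (Real.exp_pos _).le), integral_exp_neg_Ioi]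

lemma setLIntegral_Ioi_setLIntegral_Ioc_mul_exp_neg {g : ℝ → ℝ≥0∞} (hg : Measurable g)
    (a : ℝ) :
    ∫⁻ t in Ioi a, (∫⁻ s in Ioc a t, g s) * ENNReal.ofReal (Real.exp (-t)) =
      ∫⁻ s in Ioi a, g s * ENNReal.ofReal (Real.exp (-s)) := by
  rw [setLIntegral_Ioi_setLIntegral_Ioc_mul volume hg (by fun_prop)]
  simp only [setLIntegral_congr Ioi_ae_eq_Ici.symm, setLIntegral_Ioi_exp_neg]

end Tonelli

/-- The function equal to `c` on `(-∞, a]` and to `c a + ∫ s in a..t, c s` for `t ≥ a`. When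
`c t * exp (-t)` is antitone it majorizes `c`, and when `c ≥ 0` it is monotone on `[a, ∞)`. The
clamps `min t a` and `max t a` express both cases by one formula. -/
noncomputable def integralMajorant (c : ℝ → ℝ) (a t : ℝ) : ℝ :=
  c (min t a) + ∫ s in a..max t a, c s

namespace integralMajorant

variable {c : ℝ → ℝ} {s : Set ℝ} {a t : ℝ}

lemma eq_of_le (h : t ≤ a) : integralMajorant c a t = c t := by
  simp [integralMajorant, h]

lemma eq_of_ge (h : a ≤ t) : integralMajorant c a t = c a + ∫ s in a..t, c s := by
  simp [integralMajorant, h]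

lemma self_le (hc : AntitoneOn (fun t => c t * Real.exp (-t)) s) (hs : s.OrdConnected)
    (ha : a ∈ s) (ht : t ∈ s) : c t ≤ integralMajorant c a t := by
  rcases le_total t a with hta | hat
  · exact (eq_of_le hta).ge
  · have h_start : c t * Real.exp (a - t) ≤ c a :=
      mul_exp_sub_le_of_antitoneOn_mul_exp_neg hc ha ht hat
    have h_integral := mul_one_sub_exp_le_integral (hc.mono (hs.out ha ht)) hat
    rw [eq_of_ge hat]
    linarith

lemma monotoneOn_Ici (hc : ∀ t, a ≤ t → IntervalIntegrable c volume a t)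
    (hc_nonneg : ∀ t, a ≤ t → 0 ≤ c t) : MonotoneOn (integralMajorant c a) (Ici a) := by
  intro x hx y hy hxy
  rw [eq_of_ge hx, eq_of_ge hy,
    ← intervalIntegral.integral_add_adjacent_intervals (hc x hx) ((hc x hx).symm.trans (hc y hy))]
  have h_nonneg : 0 ≤ ∫ r in x..y, c r :=
    intervalIntegral.integral_nonneg hxy fun r hr => hc_nonneg r (le_trans hx hr.1)
  linarith

lemma measurable (hc_meas : Measurable c) (hc : ∀ t, a ≤ t → IntervalIntegrable c volume a t)
    (hc_nonneg : ∀ t, a ≤ t → 0 ≤ c t) : Measurable (integralMajorant c a) := by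
  have h_mono : Monotone fun t => integralMajorant c a (max t a) := fun x y hxy =>
    monotoneOn_Ici hc hc_nonneg (le_max_right x a) (le_max_right y a) (max_le_max_right a hxy)
  have h_split : integralMajorant c a =
      fun t => c (min t a) + (integralMajorant c a (max t a) - c a) := by
    funext t
    rw [eq_of_ge (le_max_right t a), add_sub_cancel_left, integralMajorant]
  rw [h_split]
  exact (hc_meas.comp (by fun_prop)).add (h_mono.measurable.sub_const _)

lemma antitoneOn_mul_exp_neg (hc : AntitoneOn (fun t => c t * Real.exp (-t)) s)
    (hs : s.OrdConnected) (ha : a ∈ s) :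
    AntitoneOn (fun t => integralMajorant c a t * Real.exp (-t)) s := by
  have h_left : AntitoneOn (fun t => integralMajorant c a t * Real.exp (-t)) (s ∩ Iic a) :=
    (hc.mono inter_subset_left).congr fun t ht => by rw [eq_of_le ht.2]
  have h_right : AntitoneOn (fun t => integralMajorant c a t * Real.exp (-t)) (s ∩ Ici a) := by
    rw [antitoneOn_mul_exp_neg_iff]
    rintro x ⟨hx, hax⟩ y ⟨hy, hay⟩ hxy
    have h_int {u v : ℝ} (hu : u ∈ s) (hv : v ∈ s) : IntervalIntegrable c volume u v :=
      intervalIntegrable_of_antitoneOn_mul_exp_neg (hc.mono (hs.uIcc_subset hu hv))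
    calc integralMajorant c a y = integralMajorant c a x + ∫ r in x..y, c r := by
          rw [eq_of_ge hax, eq_of_ge hay, add_assoc,
            intervalIntegral.integral_add_adjacent_intervals (h_int ha hx) (h_int hx hy)]
      _ ≤ integralMajorant c a x + c x * (Real.exp (y - x) - 1) := by
          gcongr
          exact integral_le_mul_exp_sub_one (hc.mono (hs.out hx hy)) hxy
      _ ≤ integralMajorant c a x + integralMajorant c a x * (Real.exp (y - x) - 1) := by
          gcongr
          · exact sub_nonneg.2 (Real.one_le_exp (sub_nonneg.2 hxy))
          · exact self_le hc hs ha hx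
      _ = integralMajorant c a x * Real.exp (y - x) := by ring
  have h_union := h_left.union_right h_right ⟨⟨ha, self_mem_Iic⟩, fun _ ht => ht.2⟩
    ⟨⟨ha, self_mem_Ici⟩, fun _ ht => ht.2⟩
  rwa [← inter_union_distrib_left, Iic_union_Ici, inter_univ] at h_union

lemma setLIntegral_Ioi_mul_exp_neg (hc_meas : Measurable c)
    (hc : ∀ t, a ≤ t → IntervalIntegrable c volume a t) (hc_nonneg : ∀ t, a ≤ t → 0 ≤ c t) :
    ∫⁻ t in Ioi a, ENNReal.ofReal (integralMajorant c a t * Real.exp (-t)) =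
      ENNReal.ofReal (c a * Real.exp (-a)) +
        ∫⁻ t in Ioi a, ENNReal.ofReal (c t * Real.exp (-t)) := by
  have h_ofReal : ∀ t ∈ Ioi a, ENNReal.ofReal (integralMajorant c a t * Real.exp (-t)) =
      ENNReal.ofReal (c a) * ENNReal.ofReal (Real.exp (-t)) +
        (∫⁻ s in Ioc a t, ENNReal.ofReal (c s)) * ENNReal.ofReal (Real.exp (-t)) := by
    intro t ht
    have hat : a ≤ t := le_of_lt ht
    have h_integral :
        ENNReal.ofReal (∫ s in a..t, c s) = ∫⁻ s in Ioc a t, ENNReal.ofReal (c s) := by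
      rw [intervalIntegral.integral_of_le hat]
      exact ofReal_integral_eq_lintegral_ofReal (hc t hat).1 <|
        (ae_restrict_mem measurableSet_Ioc).mono fun s hs => hc_nonneg s hs.1.le
    rw [eq_of_ge hat, ENNReal.ofReal_mul' (Real.exp_pos _).le,
      ENNReal.ofReal_add (hc_nonneg a le_rfl) (intervalIntegral.integral_nonneg hat fun s hs =>
        hc_nonneg s hs.1), h_integral, add_mul]
  rw [setLIntegral_congr_fun measurableSet_Ioi h_ofReal, lintegral_add_left (by fun_prop),
    lintegral_const_mul _ (by fun_prop), setLIntegral_Ioi_exp_neg,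
    setLIntegral_Ioi_setLIntegral_Ioc_mul_exp_neg (by fun_prop)]
  simp only [ENNReal.ofReal_mul' (Real.exp_pos _).le]

end integralMajorant

lemma exp_half_mul_exp_neg (t : ℝ) :
    Real.exp (t / 2) * Real.exp (-t) = Real.exp (-(1 / 2) * t) := by
  rw [← Real.exp_add]
  ring_nf

/-- Let `T ∈ ℝ` and let `c : (T, +∞) → (0, +∞)` be a measurable function such that
`t ↦ c(t)e^{−t}` is decreasing (monotone nonincreasing) on `(T, +∞)` and
`∫_{T₁}^{+∞} c(s)e^{−s} ds < +∞` for some `T₁ > T`.  Then there exists a measurable function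
`cHat : (T, +∞) → (0, +∞)` such that: (1) `ĉ ≥ c` on `(T, +∞)`; (2) `t ↦ ĉ(t)e^{−t}` is strictly
decreasing on `(T, +∞)` and `ĉ` is increasing (monotone nondecreasing) on `(a, +∞)` for some
`a > T`; (3) `∫_{T₁}^{+∞} ĉ(s)e^{−s} ds < +∞`. -/
theorem exists_increasing_dominating_gain (T T₁ : ℝ) (hT₁ : T < T₁)
    (c : ℝ → ℝ) (hc_meas : Measurable c)
    (hc_pos : ∀ t ∈ Set.Ioi T, 0 < c t)
    (hc_dec : AntitoneOn (fun t => c t * Real.exp (-t)) (Set.Ioi T))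
    (hfin : ∫⁻ s in Set.Ioi T₁, ENNReal.ofReal (c s * Real.exp (-s)) < ⊤) :
    ∃ cHat : ℝ → ℝ, Measurable cHat ∧ (∀ t ∈ Set.Ioi T, 0 < cHat t) ∧
      (∀ t ∈ Set.Ioi T, c t ≤ cHat t) ∧
      StrictAntiOn (fun t => cHat t * Real.exp (-t)) (Set.Ioi T) ∧
      (∃ a : ℝ, T < a ∧ MonotoneOn cHat (Set.Ioi a)) ∧
      ∫⁻ s in Set.Ioi T₁, ENNReal.ofReal (cHat s * Real.exp (-s)) < ⊤ := by
  have hc_nonneg (t : ℝ) (ht : T₁ ≤ t) : 0 ≤ c t := (hc_pos t (hT₁.trans_le ht)).le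
  have hc_int (t : ℝ) (ht : T₁ ≤ t) : IntervalIntegrable c volume T₁ t :=
    intervalIntegrable_of_antitoneOn_mul_exp_neg
      (hc_dec.mono (ordConnected_Ioi.uIcc_subset hT₁ (hT₁.trans_le ht)))
  have h_le : ∀ t ∈ Ioi T, c t ≤ integralMajorant c T₁ t := fun t ht =>
    integralMajorant.self_le hc_dec ordConnected_Ioi hT₁ ht
  refine ⟨fun t => integralMajorant c T₁ t + Real.exp (t / 2),
    (integralMajorant.measurable hc_meas hc_int hc_nonneg).add (by fun_prop),
    fun t ht => add_pos ((hc_pos t ht).trans_le (h_le t ht)) (Real.exp_pos _),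
    fun t ht => (h_le t ht).trans (le_add_of_nonneg_right (Real.exp_pos _).le), ?_,
    ⟨T₁, hT₁, ?_⟩, ?_⟩
  · simp only [add_mul, exp_half_mul_exp_neg]
    exact (integralMajorant.antitoneOn_mul_exp_neg hc_dec ordConnected_Ioi hT₁).add_strictAnti
      fun x _ y _ hxy => Real.exp_lt_exp.2 (by linarith)
  · exact ((integralMajorant.monotoneOn_Ici hc_int hc_nonneg).mono Ioi_subset_Ici_self).add
      fun x _ y _ hxy => Real.exp_le_exp.2 (by linarith)
  · simp only [add_mul, exp_half_mul_exp_neg]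
    refine (lintegral_mono fun t => ENNReal.ofReal_add_le).trans_lt ?_
    rw [lintegral_add_right _ (by fun_prop),
      integralMajorant.setLIntegral_Ioi_mul_exp_neg hc_meas hc_int hc_nonneg]
    exact ENNReal.add_lt_top.2 ⟨ENNReal.add_lt_top.2 ⟨ENNReal.ofReal_lt_top, hfin⟩,
      (exp_neg_integrableOn_Ioi T₁ one_half_pos).lintegral_lt_top⟩
end
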